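/- Fix a dimension d ≥ 1. There exists a constant C = C(d) > 0 such that for all ν > 0, ε > 0, all k ∈ ℝ^d with k ≠ 0, and all Schwartz functions g, h : ℝ^d → ℂ satisfying the resolvent equation ε·h(v) + i(k·v)·h(v) − ν·Δh(v) = g(v) for all v ∈ ℝ^d, one has ‖h‖_{L²(ℝ^d)} ≤ C · ν^{−1/3} · |k|^{−2/3} · ‖g‖_{L²(ℝ^d)}. -/

import Mathlib

open MeasureTheory
open scoped ENNReal RealInnerProductSpace

/-- The Laplacian of a function `h : ℝ^d → ℂ`, as the sum of the second partial
derivatives in the coordinate directions. -/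
noncomputable def lapC {d : ℕ} (h : EuclideanSpace ℝ (Fin d) → ℂ)
    (v : EuclideanSpace ℝ (Fin d)) : ℂ :=
  ∑ i : Fin d,
    fderiv ℝ (fun w => fderiv ℝ h w (EuclideanSpace.single i 1)) v (EuclideanSpace.single i 1)

open scoped LineDeriv

section aux
variable {d : ℕ}

/-- the real inner product on `ℂ` -/
noncomputable def Bc : ℂ →L[ℝ] ℂ →L[ℝ] ℝ := innerSL ℝ

lemma Bc_apply (x y : ℂ) : Bc x y = ⟪x, y⟫ := rfl

lemma aux_int (p q : SchwartzMap (EuclideanSpace ℝ (Fin d)) ℂ)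
    (m : EuclideanSpace ℝ (Fin d) → ℝ) (hm : Continuous m) (M : ℝ) (hM : ∀ v, |m v| ≤ M) :
    Integrable (fun v => m v * ⟪p v, q v⟫) := by
  have h1 : Integrable (fun v => ⟪p v, q v⟫) :=
    (SchwartzMap.pairing Bc p q).integrable
  exact h1.bdd_mul hm.aestronglyMeasurable (Filter.Eventually.of_forall hM)

/-- the divergence along w -/
noncomputable def dvg (p q : SchwartzMap (EuclideanSpace ℝ (Fin d)) ℂ)
    (m m' : EuclideanSpace ℝ (Fin d) → ℝ) (w v : EuclideanSpace ℝ (Fin d)) : ℝ :=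
  m' v * ⟪p v, q v⟫ + m v * ⟪(∂_{w} p) v, q v⟫ + m v * ⟪p v, (∂_{w} q) v⟫

lemma dvg_int (p q : SchwartzMap (EuclideanSpace ℝ (Fin d)) ℂ)
    (m m' : EuclideanSpace ℝ (Fin d) → ℝ) (hm : Continuous m) (hm' : Continuous m')
    (M : ℝ) (hM : ∀ v, |m v| ≤ M) (hM' : ∀ v, |m' v| ≤ M) (w : EuclideanSpace ℝ (Fin d)) :
    Integrable (dvg p q m m' w) :=
  ((aux_int p q m' hm' M hM').add (aux_int _ q m hm M hM)).add (aux_int p _ m hm M hM)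

lemma dvg_zero (p q : SchwartzMap (EuclideanSpace ℝ (Fin d)) ℂ)
    (m m' : EuclideanSpace ℝ (Fin d) → ℝ) (hm : Continuous m) (hm' : Continuous m')
    (M : ℝ) (hM : ∀ v, |m v| ≤ M) (hM' : ∀ v, |m' v| ≤ M) (w : EuclideanSpace ℝ (Fin d))
    (hd : ∀ v, HasLineDerivAt ℝ m (m' v) v w) :
    ∫ v, dvg p q m m' w v = 0 := by
  have hS : ∀ (f : SchwartzMap (EuclideanSpace ℝ (Fin d)) ℂ) v,
      HasLineDerivAt ℝ f ((∂_{w} f) v) v w := fun f v => by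
    rw [SchwartzMap.lineDerivOp_apply_eq_fderiv]
    exact (f.hasFDerivAt v).hasLineDerivAt w
  have i1 := aux_int p q m' hm' M hM'
  have i2 := aux_int (∂_{w} p) q m hm M hM
  have i3 := aux_int p (∂_{w} q) m hm M hM
  have i0 := aux_int p q m hm M hM
  have := integral_bilinear_hasLineDerivAt_right_eq_neg_left_of_integrable
    (μ := (volume : Measure (EuclideanSpace ℝ (Fin d))))
    (f := fun v => m v • p v) (f' := fun v => m' v • p v + m v • (∂_{w} p) v)
    (g := fun v => q v) (g' := fun v => (∂_{w} q) v) (v := w)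
    (B := Bc)
    (by
      refine (i1.add i2).congr (Filter.Eventually.of_forall fun v => ?_)
      simp only [Bc_apply, inner_add_left, real_inner_smul_left, Pi.add_apply])
    (by
      refine i3.congr (Filter.Eventually.of_forall fun v => ?_)
      simp only [Bc_apply, real_inner_smul_left])
    (by
      refine i0.congr (Filter.Eventually.of_forall fun v => ?_)
      simp only [Bc_apply, real_inner_smul_left])
    (fun v _ => by
      have h1 := hd v
      have h2 := hS p v
      unfold HasLineDerivAt at h1 h2 ⊢
      have := h1.smul h2
      simpa [add_comm, Pi.smul_def'] using this)
    (fun v _ => hS q v)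
  simp only [Bc_apply, inner_add_left, real_inner_smul_left] at this
  rw [integral_add i1 i2] at this
  unfold dvg
  have i12 : Integrable (fun v => m' v * ⟪p v, q v⟫ + m v * ⟪(∂_{w} p) v, q v⟫) := i1.add i2
  rw [integral_add i12 i3, this, integral_add i1 i2]
  ring

lemma phi_bd (δ a : ℝ) (hδ : 0 < δ) : |δ * a / (δ^2 + a^2)| ≤ 1 / 2 := by
  rw [abs_le]
  constructor
  · rw [le_div_iff₀ (by positivity)]; nlinarith [sq_nonneg (δ + a)]
  · rw [div_le_iff₀ (by positivity)]; nlinarith [sq_nonneg (δ - a)]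

lemma phi'_bd (δ a : ℝ) (hδ : 0 < δ) : |δ * (δ^2 - a^2) / (δ^2 + a^2)^2| ≤ 1 / δ := by
  rw [abs_le]
  have h : 0 < (δ^2 + a^2)^2 := by positivity
  constructor
  · rw [le_div_iff₀ h, neg_mul, neg_le, div_mul_eq_mul_div, le_div_iff₀ hδ]
    nlinarith [sq_nonneg (a * δ), sq_nonneg (a^2), sq_nonneg (δ^2)]
  · rw [div_le_div_iff₀ h hδ]
    nlinarith [sq_nonneg (a * δ), sq_nonneg (a^2), sq_nonneg (δ^2)]

lemma psi'_bd (δ a : ℝ) (hδ : 0 < δ) : |δ^2 / (δ^2 + a^2)| ≤ 1 := by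
  rw [abs_of_nonneg (by positivity), div_le_one (by positivity)]
  nlinarith [sq_nonneg a]

lemma psi_bd (δ a : ℝ) (hδ : 0 < δ) : |δ * Real.arctan (a / δ)| ≤ 2 * δ := by
  rw [abs_mul, abs_of_pos hδ]
  have : |Real.arctan (a / δ)| ≤ 2 := by
    rw [abs_le]
    constructor <;> linarith [Real.arctan_lt_pi_div_two (a/δ), Real.neg_pi_div_two_lt_arctan (a/δ), Real.pi_le_four]
  nlinarith

lemma phi_deriv (δ a : ℝ) (hδ : 0 < δ) : HasDerivAt (fun a => δ * a / (δ^2 + a^2))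
    (δ * (δ^2 - a^2) / (δ^2 + a^2)^2) a := by
  have h : (δ^2 + a^2) ≠ 0 := by positivity
  refine HasDerivAt.congr_deriv
    (((hasDerivAt_id' a).const_mul δ).div ((hasDerivAt_pow 2 a).const_add (δ^2)) h) ?_
  congr 1
  norm_num; ring

lemma psi_deriv (δ a : ℝ) (hδ : 0 < δ) : HasDerivAt (fun a => δ * Real.arctan (a / δ))
    (δ^2 / (δ^2 + a^2)) a := by
  have h : (δ^2 + a^2) ≠ 0 := by positivity
  refine HasDerivAt.congr_deriv ((((hasDerivAt_id' a).div_const δ).arctan).const_mul δ) ?_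
  field_simp

lemma line_comp (k w v : EuclideanSpace ℝ (Fin d)) (f : ℝ → ℝ) (f' : ℝ)
    (hf : HasDerivAt f f' ⟪k, v⟫) : HasLineDerivAt ℝ (fun v => f ⟪k, v⟫) (f' * ⟪k, w⟫) v w := by
  unfold HasLineDerivAt
  have h1 : HasDerivAt (fun t : ℝ => ⟪k, v + t • w⟫) ⟪k, w⟫ 0 := by
    simp only [inner_add_right, real_inner_smul_right]
    simpa using ((hasDerivAt_id (0:ℝ)).mul_const ⟪k, w⟫).const_add ⟪k, v⟫
  have h2 : HasDerivAt f f' ⟪k, v + (0:ℝ) • w⟫ := by simpa using hf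
  exact h2.comp (0:ℝ) h1

/-- pointwise inequality -/
lemma pointwise (ν ε δ K a φ φ' ψ ψ' : ℝ) (hν : 0 < ν) (hε : 0 < ε) (hδ : 0 < δ) (hK : 0 < K)
    (hδK : δ^3 = ν * K^2) (hφ : |φ| ≤ 1/2) (hφ' : |φ'| ≤ 1/δ) (hψ : |ψ| ≤ 2 * δ)
    (hid : ψ' + φ * a / δ = 1)
    (H G P Ak Bk hg Ihg A B Cc : ℝ) (hH : 0 ≤ H) (hG : 0 ≤ G) (hP : 0 ≤ P)
    (hAk : |Ak| ≤ H * (K * P)) (hBk : |Bk| ≤ H * (K * P))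
    (hhg : |hg| ≤ H * G) (hIhg : |Ihg| ≤ H * G)
    (eA : ν * A = ν * P^2 + ε * H^2 - hg)
    (eB : ν * B = ν * φ' * Bk + φ * a * H^2 - φ * Ihg)
    (eC : Cc = ψ' * K^2 * H^2 + 2 * ψ * Ak) :
    H^2 ≤ 1352 / δ^2 * G^2 + 2 * (Cc / K^2 + ν / δ * B + 25 * (ν / δ) * A) := by
  have e1 : H^2 = Cc / K^2 + ν / δ * B - 2 * ψ * Ak / K^2 - ν * φ' * Bk / δ + φ * Ihg / δ := by
    have : H^2 = (ψ' + φ * a / δ) * H^2 := by rw [hid, one_mul]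
    have h2 : ν / δ * B = (ν * φ' * Bk + φ * a * H^2 - φ * Ihg) / δ := by rw [← eB]; ring
    rw [this, h2, eC]; field_simp; ring
  have b1 : -(2 * ψ * Ak / K^2) ≤ 4 * δ * (H * (K * P)) / K^2 := by
    rw [← neg_div]
    gcongr
    have := mul_le_mul hψ hAk (abs_nonneg _) (by positivity)
    rw [← abs_mul] at this
    linarith [neg_abs_le (ψ * Ak)]
  have b2 : -(ν * φ' * Bk / δ) ≤ ν * (1 / δ * (H * (K * P))) / δ := by
    rw [← neg_div]
    gcongr
    have := mul_le_mul hφ' hBk (abs_nonneg _) (by positivity)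
    rw [← abs_mul] at this
    nlinarith [neg_abs_le (φ' * Bk)]
  have b3 : φ * Ihg / δ ≤ 1/2 * (H * G) / δ := by
    refine div_le_div_of_nonneg_right ?_ hδ.le
    have := mul_le_mul hφ hIhg (abs_nonneg _) (by positivity)
    rw [← abs_mul] at this
    linarith [le_abs_self (φ * Ihg)]
  have hν' : ν = δ^3 / K^2 := by field_simp; linarith
  have c1 : 4 * δ * (H * (K * P)) / K^2 + ν * (1 / δ * (H * (K * P))) / δ = H * (5 * (δ / K * P)) := by
    rw [hν']; field_simp; ring
  have c2 : H * (5 * (δ / K * P)) ≤ H^2 / 4 + 25 * (δ / K * P)^2 := by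
    nlinarith [sq_nonneg (H / 2 - 5 * (δ / K * P))]
  have c3 : 25 * (δ / K * P)^2 = 25 / δ * (ν * P^2) := by rw [hν']; field_simp
  have c4 : ν * P^2 ≤ ν * A + H * G := by
    have : 0 ≤ ε * H^2 := by positivity
    linarith [le_abs_self hg]
  have c5 : 25 / δ * (ν * P^2) ≤ 25 / δ * (ν * A + H * G) := by gcongr
  have c6 : 26 * (H * (G / δ)) ≤ H^2 / 4 + 676 * (G / δ)^2 := by
    nlinarith [sq_nonneg (H / 2 - 26 * (G / δ))]
  have c7 : 25 / δ * (ν * A + H * G) = 25 * (ν / δ) * A + 25 * (H * (G / δ)) := by ring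
  have c8 : 1/2 * (H * G) / δ = 1/2 * (H * (G / δ)) := by ring
  have c9 : 1352 / δ^2 * G^2 = 1352 * (G / δ)^2 := by ring
  have c10 : 0 ≤ H * (G / δ) := by positivity
  rw [c9]
  rw [c7] at c5
  rw [c8] at b3
  linarith only [e1, b1, b2, b3, c1, c2, c3, c4, c5, c6, c10]
end aux

section main
variable {d : ℕ}

lemma lapC_eq (h : SchwartzMap (EuclideanSpace ℝ (Fin d)) ℂ) (v : EuclideanSpace ℝ (Fin d)) :
    lapC (fun w => h w) v = ∑ i : Fin d,
      (∂_{(EuclideanSpace.single i (1:ℝ) : EuclideanSpace ℝ (Fin d))}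
        (∂_{(EuclideanSpace.single i (1:ℝ) : EuclideanSpace ℝ (Fin d))} h)) v := by
  unfold lapC
  refine Finset.sum_congr rfl fun i _ => ?_
  rw [SchwartzMap.lineDerivOp_apply_eq_fderiv]
  congr 2

lemma dk_eq (h : SchwartzMap (EuclideanSpace ℝ (Fin d)) ℂ) (k v : EuclideanSpace ℝ (Fin d)) :
    (∂_{k} h) v = ∑ i : Fin d, k i •
      (∂_{(EuclideanSpace.single i (1:ℝ) : EuclideanSpace ℝ (Fin d))} h) v := by
  simp only [SchwartzMap.lineDerivOp_apply_eq_fderiv]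
  conv_lhs => rw [← (EuclideanSpace.basisFun (Fin d) ℝ).sum_repr k]
  simp [map_sum]

lemma norm_dk (k : EuclideanSpace ℝ (Fin d)) (p : Fin d → ℂ) :
    ‖∑ i, k i • p i‖ ≤ ‖k‖ * Real.sqrt (∑ i, ‖p i‖^2) := by
  refine (norm_sum_le _ _).trans ?_
  simp only [norm_smul]
  rw [EuclideanSpace.norm_eq]
  exact Real.sum_mul_le_sqrt_mul_sqrt _ _ _

lemma inner_I_self (z : ℂ) : ⟪Complex.I * z, z⟫ = (0:ℝ) := by
  rw [Complex.inner]
  simp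
  ring

lemma abs_inner_I (z w : ℂ) : |⟪Complex.I * z, w⟫| ≤ ‖z‖ * ‖w‖ := by
  simpa using abs_real_inner_le_norm (Complex.I * z) w

lemma key (ν ε δ : ℝ) (hν : 0 < ν) (hε : 0 < ε) (hδ : 0 < δ)
    (k : EuclideanSpace ℝ (Fin d)) (hk : k ≠ 0) (hδK : δ^3 = ν * ‖k‖^2)
    (g h : SchwartzMap (EuclideanSpace ℝ (Fin d)) ℂ)
    (heq : ∀ v, (ε : ℂ) * h v + Complex.I * ((⟪k, v⟫ : ℝ) : ℂ) * h v
            - (ν : ℂ) * lapC (fun w => h w) v = g v) :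
    ∫ v, ‖h v‖^2 ≤ 1352 / δ^2 * ∫ v, ‖g v‖^2 := by
  have hK : 0 < ‖k‖ := norm_pos_iff.2 hk
  set e : Fin d → EuclideanSpace ℝ (Fin d) := fun i => EuclideanSpace.single i (1:ℝ) with he
  set φ : ℝ → ℝ := fun a => δ * a / (δ^2 + a^2) with hφ
  set φ' : ℝ → ℝ := fun a => δ * (δ^2 - a^2) / (δ^2 + a^2)^2 with hφ'
  set ψ : ℝ → ℝ := fun a => δ * Real.arctan (a / δ) with hψ
  set ψ' : ℝ → ℝ := fun a => δ^2 / (δ^2 + a^2) with hψ'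
  have pos : ∀ a : ℝ, δ^2 + a^2 ≠ 0 := fun a => by positivity
  have cφ : Continuous φ := by
    rw [hφ]; exact Continuous.div (by fun_prop) (by fun_prop) pos
  have cφ' : Continuous φ' := by
    rw [hφ']; exact Continuous.div (by fun_prop) (by fun_prop) (fun a => pow_ne_zero 2 (pos a))
  have cψ : Continuous ψ := by
    rw [hψ]; exact continuous_const.mul (Real.continuous_arctan.comp (by fun_prop))
  have cψ' : Continuous ψ' := by
    rw [hψ']; exact Continuous.div (by fun_prop) (by fun_prop) pos
  have ck : Continuous fun v : EuclideanSpace ℝ (Fin d) => (⟪k, v⟫ : ℝ) := by fun_prop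
  -- the three divergences
  let DA : Fin d → EuclideanSpace ℝ (Fin d) → ℝ := fun i =>
    dvg h (∂_{e i} h) (fun _ => 1) (fun _ => 0) (e i)
  let DB : Fin d → EuclideanSpace ℝ (Fin d) → ℝ := fun i =>
    dvg (Complex.I • h) (∂_{e i} h) (fun v => φ ⟪k, v⟫) (fun v => φ' ⟪k, v⟫ * ⟪k, e i⟫) (e i)
  let DC : EuclideanSpace ℝ (Fin d) → ℝ :=
    dvg h h (fun v => ψ ⟪k, v⟫) (fun v => ψ' ⟪k, v⟫ * ⟪k, k⟫) k
  have hA : ∀ i, Integrable (DA i) ∧ ∫ v, DA i v = 0 := fun i =>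
    ⟨dvg_int _ _ _ _ continuous_const continuous_const 1 (by simp) (by simp) _,
     dvg_zero _ _ _ _ continuous_const continuous_const 1 (by simp) (by simp) _
      (fun v => by simpa [HasLineDerivAt] using hasDerivAt_const (0:ℝ) (1:ℝ))⟩
  have hB : ∀ i, Integrable (DB i) ∧ ∫ v, DB i v = 0 := fun i => by
    have c1 : Continuous fun v : EuclideanSpace ℝ (Fin d) => φ ⟪k, v⟫ := cφ.comp ck
    have c2 : Continuous fun v : EuclideanSpace ℝ (Fin d) => φ' ⟪k, v⟫ * ⟪k, e i⟫ :=
      (cφ'.comp ck).mul continuous_const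
    have b1 : ∀ v : EuclideanSpace ℝ (Fin d), |φ ⟪k, v⟫| ≤ max (1/2) (1 / δ * |⟪k, e i⟫|) :=
      fun v => (phi_bd δ _ hδ).trans (le_max_left _ _)
    have b2 : ∀ v : EuclideanSpace ℝ (Fin d), |φ' ⟪k, v⟫ * ⟪k, e i⟫|
        ≤ max (1/2) (1 / δ * |⟪k, e i⟫|) := fun v => by
      rw [abs_mul]
      exact (mul_le_mul_of_nonneg_right (phi'_bd δ _ hδ) (abs_nonneg _)).trans (le_max_right _ _)
    exact ⟨dvg_int _ _ _ _ c1 c2 _ b1 b2 _, dvg_zero _ _ _ _ c1 c2 _ b1 b2 _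
      (fun v => line_comp k (e i) v φ _ (phi_deriv δ _ hδ))⟩
  have hC : Integrable DC ∧ ∫ v, DC v = 0 := by
    have c1 : Continuous fun v : EuclideanSpace ℝ (Fin d) => ψ ⟪k, v⟫ := cψ.comp ck
    have c2 : Continuous fun v : EuclideanSpace ℝ (Fin d) => ψ' ⟪k, v⟫ * ⟪k, k⟫ :=
      (cψ'.comp ck).mul continuous_const
    have b1 : ∀ v : EuclideanSpace ℝ (Fin d), |ψ ⟪k, v⟫| ≤ max (2 * δ) (1 * |⟪k, k⟫|) :=
      fun v => (psi_bd δ _ hδ).trans (le_max_left _ _)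
    have b2 : ∀ v : EuclideanSpace ℝ (Fin d), |ψ' ⟪k, v⟫ * ⟪k, k⟫|
        ≤ max (2 * δ) (1 * |⟪k, k⟫|) := fun v => by
      rw [abs_mul]
      exact (mul_le_mul_of_nonneg_right (psi'_bd δ _ hδ) (abs_nonneg _)).trans (le_max_right _ _)
    exact ⟨dvg_int _ _ _ _ c1 c2 _ b1 b2 _, dvg_zero _ _ _ _ c1 c2 _ b1 b2 _
      (fun v => line_comp k k v ψ _ (psi_deriv δ _ hδ))⟩
  have pw : ∀ v, ‖h v‖^2 ≤ 1352 / δ^2 * ‖g v‖^2 + 2 * (DC v / ‖k‖^2 + ν / δ * (∑ i, DB i v)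
      + 25 * (ν / δ) * (∑ i, DA i v)) := by
    intro v
    have hdk : (∂_{k} h) v = ∑ i, k i • (∂_{e i} h) v := dk_eq h k v
    have hP0 : 0 ≤ ∑ i, ‖(∂_{e i} h) v‖^2 := Finset.sum_nonneg fun i _ => by positivity
    have hnk : ‖(∂_{k} h) v‖ ≤ ‖k‖ * Real.sqrt (∑ i, ‖(∂_{e i} h) v‖^2) := by
      rw [hdk]; exact norm_dk _ _
    have hlap : lapC (fun w => h w) v = ∑ i, (∂_{e i} (∂_{e i} h)) v := lapC_eq h v
    have hke : ∀ i, (⟪k, e i⟫ : ℝ) = k i := fun i => by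
      simp [he, EuclideanSpace.inner_single_right]
    have hg' : g v = ε • h v + (⟪k, v⟫ : ℝ) • (Complex.I * h v) - ν • lapC (fun w => h w) v := by
      rw [← heq v]; simp only [Complex.real_smul]; ring
    have g1 : ⟪h v, g v⟫ = ε * ‖h v‖^2 - ν * ⟪h v, lapC (fun w => h w) v⟫ := by
      rw [hg', inner_sub_right, inner_add_right, real_inner_smul_right, real_inner_smul_right,
        real_inner_smul_right, real_inner_self_eq_norm_sq, real_inner_comm (Complex.I * h v) (h v), inner_I_self]
      ring
    have g2 : ⟪Complex.I * h v, g v⟫ = ⟪k, v⟫ * ‖h v‖^2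
        - ν * ⟪Complex.I * h v, lapC (fun w => h w) v⟫ := by
      rw [hg', inner_sub_right, inner_add_right, real_inner_smul_right, real_inner_smul_right,
        real_inner_smul_right, real_inner_self_eq_norm_sq, inner_I_self]
      simp
    have sA : ∑ i, DA i v = ∑ i, ‖(∂_{e i} h) v‖^2 + ⟪h v, lapC (fun w => h w) v⟫ := by
      rw [hlap, inner_sum, ← Finset.sum_add_distrib]
      refine Finset.sum_congr rfl fun i _ => ?_
      simp only [DA, dvg]
      rw [real_inner_self_eq_norm_sq]
      ring
    have sB : ∑ i, DB i v = φ' ⟪k, v⟫ * ⟪Complex.I * h v, (∂_{k} h) v⟫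
        + φ ⟪k, v⟫ * ⟪Complex.I * h v, lapC (fun w => h w) v⟫ := by
      rw [hlap, hdk, inner_sum, inner_sum, Finset.mul_sum, Finset.mul_sum,
        ← Finset.sum_add_distrib]
      refine Finset.sum_congr rfl fun i _ => ?_
      simp only [DB, dvg]
      rw [LineDeriv.lineDerivOp_smul]
      simp only [smul_apply, smul_eq_mul]
      rw [inner_I_self, hke, real_inner_smul_right]
      ring
    have sC : DC v = ψ' ⟪k, v⟫ * ‖k‖^2 * ‖h v‖^2 + 2 * ψ ⟪k, v⟫ * ⟪h v, (∂_{k} h) v⟫ := by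
      simp only [DC, dvg]
      rw [real_inner_self_eq_norm_sq, real_inner_self_eq_norm_sq, real_inner_comm (h v)]
      ring
    refine pointwise ν ε δ ‖k‖ ⟪k, v⟫ (φ ⟪k, v⟫) (φ' ⟪k, v⟫) (ψ ⟪k, v⟫) (ψ' ⟪k, v⟫) hν hε hδ hK hδK
      (phi_bd δ _ hδ) (phi'_bd δ _ hδ) (psi_bd δ _ hδ) ?_ ‖h v‖ ‖g v‖
      (Real.sqrt (∑ i, ‖(∂_{e i} h) v‖^2)) ⟪h v, (∂_{k} h) v⟫ ⟪Complex.I * h v, (∂_{k} h) v⟫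
      ⟪h v, g v⟫ ⟪Complex.I * h v, g v⟫ _ _ _ (norm_nonneg _) (norm_nonneg _) (Real.sqrt_nonneg _)
      ?_ ?_ (abs_real_inner_le_norm _ _) (abs_inner_I _ _) ?_ ?_ sC
    · have := pos ⟪k, v⟫
      simp only [hψ', hφ]
      field_simp
    · exact (abs_real_inner_le_norm _ _).trans (mul_le_mul_of_nonneg_left hnk (norm_nonneg _))
    · exact (abs_inner_I _ _).trans (mul_le_mul_of_nonneg_left hnk (norm_nonneg _))
    · rw [sA, Real.sq_sqrt hP0, g1]; ring
    · rw [sB, g2]; ring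
  have ih : Integrable (fun v => ‖h v‖^2) := (h.memLp 2 volume).integrable_norm_pow (by norm_num)
  have ig : Integrable (fun v => ‖g v‖^2) := (g.memLp 2 volume).integrable_norm_pow (by norm_num)
  have iSA : Integrable (fun v => ∑ i, DA i v) := integrable_finsetSum _ fun i _ => (hA i).1
  have iSB : Integrable (fun v => ∑ i, DB i v) := integrable_finsetSum _ fun i _ => (hB i).1
  have zA : ∫ v, ∑ i, DA i v = 0 := by
    rw [integral_finsetSum _ fun i _ => (hA i).1]
    exact Finset.sum_eq_zero fun i _ => (hA i).2
  have zB : ∫ v, ∑ i, DB i v = 0 := by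
    rw [integral_finsetSum _ fun i _ => (hB i).1]
    exact Finset.sum_eq_zero fun i _ => (hB i).2
  have j1 : Integrable (fun v => DC v / ‖k‖^2) := hC.1.div_const _
  have j2 : Integrable (fun v => ν / δ * (∑ i, DB i v)) := iSB.const_mul _
  have j3 : Integrable (fun v => 25 * (ν / δ) * (∑ i, DA i v)) := iSA.const_mul _
  have j12 : Integrable (fun v => DC v / ‖k‖^2 + ν / δ * (∑ i, DB i v)) := j1.add j2
  have j123 : Integrable (fun v => DC v / ‖k‖^2 + ν / δ * (∑ i, DB i v)
      + 25 * (ν / δ) * (∑ i, DA i v)) := j12.add j3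
  have j4 : Integrable (fun v => 1352 / δ^2 * ‖g v‖^2) := ig.const_mul _
  have := integral_mono ih (j4.add (j123.const_mul 2)) pw
  refine this.trans (le_of_eq ?_)
  change ∫ v, (1352 / δ^2 * ‖g v‖^2 + 2 * (DC v / ‖k‖^2 + ν / δ * (∑ i, DB i v)
      + 25 * (ν / δ) * (∑ i, DA i v))) = _
  rw [integral_add j4 (j123.const_mul 2), integral_const_mul, integral_const_mul,
    integral_add j12 j3, integral_add j1 j2, integral_const_mul, integral_const_mul,
    integral_div, zA, zB, hC.2]
  simp
end main

/-- Airy-type hypoelliptic resolvent estimate for the transport operator `i k·v − ν Δ`: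
`‖h‖_{L²} ≤ C ν^{-1/3} |k|^{-2/3} ‖g‖_{L²}`. -/
theorem stmt0 (d : ℕ) (hd : 1 ≤ d) :
    ∃ C : ℝ, 0 < C ∧
      ∀ (ν ε : ℝ), 0 < ν → 0 < ε →
      ∀ k : EuclideanSpace ℝ (Fin d), k ≠ 0 →
      ∀ g h : SchwartzMap (EuclideanSpace ℝ (Fin d)) ℂ,
        (∀ v, (ε : ℂ) * h v + Complex.I * ((⟪k, v⟫ : ℝ) : ℂ) * h v
            - (ν : ℂ) * lapC (fun w => h w) v = g v) →
        eLpNorm (fun v => h v) 2 volume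
          ≤ ENNReal.ofReal (C * ν ^ (-(1 : ℝ) / 3) * ‖k‖ ^ (-(2 : ℝ) / 3)) *
            eLpNorm (fun v => g v) 2 volume := by
  refine ⟨40, by norm_num, fun ν ε hν hε k hk g h heq => ?_⟩
  have hK : 0 < ‖k‖ := norm_pos_iff.2 hk
  set c : ℝ := ν ^ (-(1 : ℝ) / 3) * ‖k‖ ^ (-(2 : ℝ) / 3) with hc
  have hc0 : 0 < c := by positivity
  have hc3 : c^3 = ν⁻¹ * (‖k‖^2)⁻¹ := by
    rw [hc, mul_pow, ← Real.rpow_natCast, ← Real.rpow_natCast, ← Real.rpow_mul hν.le,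
      ← Real.rpow_mul hK.le]
    norm_num
    rw [Real.rpow_neg_one]
    exact Or.inl rfl
  have := key ν ε c⁻¹ hν hε (by positivity) k hk (by rw [inv_pow, hc3]; simp [mul_comm]) g h heq
  have h2 : (1352 : ℝ) / (c⁻¹)^2 = 1352 * c^2 := by field_simp
  rw [h2] at this
  have hn : ∀ f : SchwartzMap (EuclideanSpace ℝ (Fin d)) ℂ,
      eLpNorm (fun v => f v) 2 volume = ENNReal.ofReal (Real.sqrt (∫ v, ‖f v‖^2)) := fun f => by
    have := (f.memLp 2 volume).eLpNorm_eq_integral_rpow_norm (by norm_num) (by norm_num)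
    rw [Real.sqrt_eq_rpow]
    simpa using this
  rw [hn, hn, ← ENNReal.ofReal_mul (by positivity), mul_assoc 40, ← hc]
  apply ENNReal.ofReal_le_ofReal
  have hg0 : 0 ≤ ∫ v, ‖g v‖^2 := integral_nonneg fun v => by positivity
  rw [← Real.sqrt_sq (show 0 ≤ 40 * c by positivity), ← Real.sqrt_mul (by positivity)]
  apply Real.sqrt_le_sqrt
  nlinarith [mul_nonneg (sq_nonneg c) hg0]
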